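/- Let A and B be subspaces of a finite-dimensional Hilbert space H with orthonormal bases given as the columns of matrices V_A and V_B, and set R_A = 2V_A V_A† − I, R_B = 2V_B V_B† − I. Then on A + B, the unitary R_A R_B has eigenvalue 1 with multiplicity 1 (assuming V_A† V_B has singular value 1 with multiplicity 1), and every other eigenvalue of R_A R_B on A + B is either −1 or of the form e^{±2iθ} with θ = arccos(λ) ∈ (0, π/2) for a singular value λ ∈ (0,1) of V_A† V_B. -/

import Mathlib

open scoped BigOperators
open Matrix


open scoped ComplexOrder in
lemma dot_zero_aux {N : ℕ} (v : Fin N → ℂ) (h : star v ⬝ᵥ v = 0) : v = 0 :=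
  dotProduct_star_self_eq_zero.1 h

lemma refl_aux {N m : ℕ} (V : Matrix (Fin N) (Fin m) ℂ) (hV : Vᴴ * V = 1)
    (R : Matrix (Fin N) (Fin N) ℂ) (hR : R = (2 : ℂ) • (V * Vᴴ) - 1) :
    R * R = 1 ∧ Rᴴ = R := by
  have hP : (V * Vᴴ) * (V * Vᴴ) = V * Vᴴ := by
    rw [Matrix.mul_assoc, ← Matrix.mul_assoc Vᴴ, hV, Matrix.one_mul]
  constructor
  · rw [hR, sub_mul, mul_sub, mul_sub, smul_mul_smul_comm, hP]
    simp only [mul_one, one_mul]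
    module
  · rw [hR]
    simp [conjTranspose_sub, conjTranspose_smul, conjTranspose_mul]

/-- A vector of `A + B` orthogonal to both `A` and `B` vanishes. -/
lemma zero_aux {N m n : ℕ}
    (VA : Matrix (Fin N) (Fin m) ℂ) (VB : Matrix (Fin N) (Fin n) ℂ) (v : Fin N → ℂ)
    (hv : v ∈ (LinearMap.range VA.mulVecLin ⊔ LinearMap.range VB.mulVecLin))
    (hA : VAᴴ *ᵥ v = 0) (hB : VBᴴ *ᵥ v = 0) : v = 0 := by
  obtain ⟨_, ⟨a, rfl⟩, _, ⟨b, rfl⟩, hab⟩ := Submodule.mem_sup.1 hv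
  rw [Matrix.mulVecLin_apply, Matrix.mulVecLin_apply] at hab
  have h : star v ⬝ᵥ v = 0 := by
    nth_rewrite 1 [← hab]
    rw [star_add, add_dotProduct, star_mulVec, star_mulVec, ← dotProduct_mulVec,
      ← dotProduct_mulVec, hA, hB]
    simp
  exact dot_zero_aux _ h

/-- The unit circle computation. -/
lemma circle_aux (μ : ℂ) (hμ : ‖μ‖ = 1) (h1 : μ ≠ 1) (h2 : μ ≠ -1) :
    ∃ lam θ : ℝ, lam ∈ Set.Ioo (0 : ℝ) 1 ∧ θ ∈ Set.Ioo 0 (Real.pi / 2) ∧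
      Real.cos θ = lam ∧ 4 * μ * (lam : ℂ) ^ 2 = (1 + μ) ^ 2 ∧
      (μ = Complex.exp (2 * θ * Complex.I) ∨ μ = Complex.exp (-(2 * θ) * Complex.I)) := by
  have key : ∀ t : ℝ, μ = Complex.exp (2 * t * Complex.I) →
      4 * μ * ((Real.cos t : ℝ) : ℂ) ^ 2 = (1 + μ) ^ 2 := by
    intro t ht
    have e1 : μ = Complex.exp (t * Complex.I) ^ 2 := by
      rw [ht, ← Complex.exp_nat_mul]; congr 1; push_cast; ring
    have e2 : Complex.exp (t * Complex.I) * Complex.exp (-t * Complex.I) = 1 := by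
      rw [← Complex.exp_add]; simp
    rw [Complex.ofReal_cos, Complex.cos, e1]
    generalize Complex.exp (t * Complex.I) = z at *
    generalize Complex.exp (-t * Complex.I) = w at *
    have : 4 * z ^ 2 * ((z + w) / 2) ^ 2 = (z ^ 2 + z * w) ^ 2 := by ring
    rw [this, e2]; ring
  have harg : μ = Complex.exp (Complex.arg μ * Complex.I) := by
    have := Complex.norm_mul_exp_arg_mul_I μ
    rw [hμ] at this
    simpa using this.symm
  have hne0 : Complex.arg μ ≠ 0 := by
    intro h; rw [h] at harg; apply h1; rw [harg]; simp
  have hnepi : Complex.arg μ ≠ Real.pi := by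
    intro h; rw [h] at harg; apply h2; rw [harg]; exact Complex.exp_pi_mul_I
  have hlt : Complex.arg μ < Real.pi := lt_of_le_of_ne (Complex.arg_le_pi μ) hnepi
  have hgt := Complex.neg_pi_lt_arg μ
  have fin : ∀ θ : ℝ, 0 < θ → θ < Real.pi / 2 → 
      (μ = Complex.exp (2 * θ * Complex.I) ∨ μ = Complex.exp (-(2 * θ) * Complex.I)) →
      ∃ lam θ : ℝ, lam ∈ Set.Ioo (0 : ℝ) 1 ∧ θ ∈ Set.Ioo 0 (Real.pi / 2) ∧
      Real.cos θ = lam ∧ 4 * μ * (lam : ℂ) ^ 2 = (1 + μ) ^ 2 ∧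
      (μ = Complex.exp (2 * θ * Complex.I) ∨ μ = Complex.exp (-(2 * θ) * Complex.I)) := by
    intro θ h0 hp h
    refine ⟨Real.cos θ, θ, ⟨Real.cos_pos_of_mem_Ioo ⟨by linarith, hp⟩, ?_⟩, ⟨h0, hp⟩, rfl, ?_, h⟩
    · rw [← Real.cos_zero]
      exact Real.cos_lt_cos_of_nonneg_of_le_pi_div_two le_rfl hp.le h0
    · rcases h with h | h
      · exact key θ h
      · have := key (-θ) (by rw [h]; congr 1; push_cast; ring)
        rwa [Real.cos_neg] at this
  rcases lt_or_gt_of_ne hne0 with h | h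
  · refine fin (-Complex.arg μ / 2) (by linarith) (by linarith) (Or.inr ?_)
    nth_rewrite 1 [harg]; congr 1; push_cast; ring
  · refine fin (Complex.arg μ / 2) (by linarith) (by linarith) (Or.inl ?_)
    nth_rewrite 1 [harg]; congr 1; push_cast; ring

/-- The eigenvalue equation, after applying `R_A`. -/
lemma eig_aux {N m n : ℕ}
    (VA : Matrix (Fin N) (Fin m) ℂ) (VB : Matrix (Fin N) (Fin n) ℂ)
    (hVA : VAᴴ * VA = 1)
    (RA RB : Matrix (Fin N) (Fin N) ℂ)
    (hRA : RA = (2 : ℂ) • (VA * VAᴴ) - 1)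
    (hRB : RB = (2 : ℂ) • (VB * VBᴴ) - 1) (μ : ℂ) (v : Fin N → ℂ)
    (h : (RA * RB) *ᵥ v = μ • v) :
    (2 : ℂ) • (VB *ᵥ (VBᴴ *ᵥ v)) - (2 * μ) • (VA *ᵥ (VAᴴ *ᵥ v)) = (1 - μ) • v := by
  have h' := congrArg (fun w => RA *ᵥ w) h
  simp only [mulVec_mulVec, mulVec_smul] at h'
  rw [← Matrix.mul_assoc, (refl_aux VA hVA RA hRA).1, Matrix.one_mul, hRA, hRB,
    sub_mulVec, sub_mulVec, smul_mulVec, smul_mulVec, one_mulVec] at h'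
  rw [mulVec_mulVec, mulVec_mulVec]
  linear_combination (norm := module) h'

lemma fixed_aux {N m : ℕ} (V : Matrix (Fin N) (Fin m) ℂ) (hV : Vᴴ * V = 1) (v : Fin N → ℂ)
    (h : star v ⬝ᵥ (V *ᵥ (Vᴴ *ᵥ v)) = star v ⬝ᵥ v) : V *ᵥ (Vᴴ *ᵥ v) = v := by
  have h0 : star (V *ᵥ (Vᴴ *ᵥ v) - v) ⬝ᵥ (V *ᵥ (Vᴴ *ᵥ v) - v) = 0 := by
    rw [star_sub, sub_dotProduct, star_mulVec, ← dotProduct_mulVec, mulVec_sub, mulVec_mulVec, hV,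
      one_mulVec, sub_self, dotProduct_zero, dotProduct_sub, h]
    simp
  exact sub_eq_zero.1 (dot_zero_aux _ h0)

/-- Szegedy's spectral theorem: on the sum of the subspaces `A` and `B`
(spanned by the orthonormal columns of `V_A` and `V_B`), the product of the
reflections `R_A R_B` has eigenvalue `1` with multiplicity one (given that the
singular value `1` of `V_Aᴴ V_B` has multiplicity one), and every other
eigenvalue on `A + B` is `-1` or of the form `e^{±2iθ}` with
`θ = arccos λ ∈ (0, π/2)` for a singular value `λ ∈ (0,1)` of `V_Aᴴ V_B`. -/
theorem szegedy_spectral_theorem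
    {N m n : ℕ}
    (VA : Matrix (Fin N) (Fin m) ℂ) (VB : Matrix (Fin N) (Fin n) ℂ)
    (hVA : VAᴴ * VA = 1) (hVB : VBᴴ * VB = 1)
    (RA RB : Matrix (Fin N) (Fin N) ℂ)
    (hRA : RA = (2 : ℂ) • (VA * VAᴴ) - 1)
    (hRB : RB = (2 : ℂ) • (VB * VBᴴ) - 1)
    (hmult : Module.finrank ℂ
        (Module.End.eigenspace (Matrix.mulVecLin ((VAᴴ * VB)ᴴ * (VAᴴ * VB))) 1) = 1) :
    Module.finrank ℂ
        ((Module.End.eigenspace (Matrix.mulVecLin (RA * RB)) 1) ⊓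
          (LinearMap.range VA.mulVecLin ⊔ LinearMap.range VB.mulVecLin) :
            Submodule ℂ (Fin N → ℂ)) = 1 ∧
    (∀ (μ : ℂ) (v : Fin N → ℂ),
      v ∈ (LinearMap.range VA.mulVecLin ⊔ LinearMap.range VB.mulVecLin) → v ≠ 0 →
      (RA * RB).mulVec v = μ • v →
      μ = 1 ∨ μ = -1 ∨
        ∃ lam θ : ℝ, lam ∈ Set.Ioo (0 : ℝ) 1 ∧ θ ∈ Set.Ioo 0 (Real.pi / 2) ∧
          Real.cos θ = lam ∧
          ((lam : ℂ) ^ 2) ∈ spectrum ℂ ((VAᴴ * VB)ᴴ * (VAᴴ * VB)) ∧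
          (μ = Complex.exp (2 * θ * Complex.I) ∨
            μ = Complex.exp (-(2 * θ) * Complex.I))) := by 
  have hAmul : ∀ a, VAᴴ *ᵥ (VA *ᵥ a) = a := fun a => by rw [mulVec_mulVec, hVA, one_mulVec]
  have hBmul : ∀ a, VBᴴ *ᵥ (VB *ᵥ a) = a := fun a => by rw [mulVec_mulVec, hVB, one_mulVec]
  have hM : ∀ x, ((VAᴴ * VB)ᴴ * (VAᴴ * VB)) *ᵥ x = VBᴴ *ᵥ (VA *ᵥ (VAᴴ *ᵥ (VB *ᵥ x))) := by
    intro x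
    simp only [mulVec_mulVec, conjTranspose_mul, conjTranspose_conjTranspose, Matrix.mul_assoc]
  constructor
  · rw [← hmult]
    have hinj : Function.Injective VB.mulVecLin := by
      intro a b hab
      have := congrArg (fun w => VBᴴ *ᵥ w) hab
      simpa only [mulVecLin_apply, hBmul] using this
    have hfin : ((Module.End.eigenspace (Matrix.mulVecLin (RA * RB)) 1) ⊓
          (LinearMap.range VA.mulVecLin ⊔ LinearMap.range VB.mulVecLin) :
            Submodule ℂ (Fin N → ℂ)) =
        (Module.End.eigenspace (Matrix.mulVecLin ((VAᴴ * VB)ᴴ * (VAᴴ * VB))) 1).map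
          VB.mulVecLin := by
      ext v
      rw [Submodule.mem_inf, Submodule.mem_map, Module.End.mem_eigenspace_iff, mulVecLin_apply]
      constructor
      · rintro ⟨h, hv⟩
        have E := eig_aux VA VB hVA RA RB hRA hRB 1 v h
        have E' : VB *ᵥ (VBᴴ *ᵥ v) = VA *ᵥ (VAᴴ *ᵥ v) := by
          rw [mul_one, sub_self, zero_smul, ← smul_sub, smul_eq_zero] at E
          exact sub_eq_zero.1 (E.resolve_left two_ne_zero)
        have hw : v = VB *ᵥ (VBᴴ *ᵥ v) := by
          rw [← sub_eq_zero]
          apply zero_aux VA VB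
          · exact Submodule.sub_mem _ hv (Submodule.mem_sup_right ⟨VBᴴ *ᵥ v, rfl⟩)
          · rw [E', mulVec_sub, hAmul, sub_self]
          · rw [mulVec_sub, hBmul, sub_self]
        refine ⟨VBᴴ *ᵥ v, ?_, hw.symm⟩
        rw [Module.End.mem_eigenspace_iff, mulVecLin_apply, hM, one_smul, ← hw, ← E', hBmul]
      · rintro ⟨x, hx, rfl⟩
        rw [Module.End.mem_eigenspace_iff, mulVecLin_apply, hM, one_smul] at hx
        rw [mulVecLin_apply]
        have hPv : VA *ᵥ (VAᴴ *ᵥ (VB *ᵥ x)) = VB *ᵥ x := by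
          apply fixed_aux VA hVA
          rw [star_mulVec, ← dotProduct_mulVec, ← dotProduct_mulVec, hx, hBmul]
        refine ⟨?_, Submodule.mem_sup_right ⟨x, rfl⟩⟩
        have r2 : RB *ᵥ (VB *ᵥ x) = VB *ᵥ x := by
          rw [hRB, sub_mulVec, smul_mulVec, one_mulVec, ← mulVec_mulVec, hBmul]
          module
        have r1 : RA *ᵥ (VB *ᵥ x) = VB *ᵥ x := by
          rw [hRA, sub_mulVec, smul_mulVec, one_mulVec, ← mulVec_mulVec, hPv]
          module
        rw [← mulVec_mulVec, r2, r1, one_smul]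
    rw [hfin]
    exact (Submodule.equivMapOfInjective VB.mulVecLin hinj _).finrank_eq.symm
  · intro μ v hv hv0 h
    by_cases h1 : μ = 1
    · exact Or.inl h1
    by_cases h2 : μ = -1
    · exact Or.inr (Or.inl h2)
    refine Or.inr (Or.inr ?_)
    have h2' : 1 + μ ≠ 0 := fun h => h2 (by linear_combination h)
    have hsvv : star v ⬝ᵥ v ≠ 0 := fun h =>
      hv0 (dot_zero_aux _ h)
    have hnorm : ‖μ‖ = 1 := by
      obtain ⟨a1, a2⟩ := refl_aux VA hVA RA hRA
      obtain ⟨b1, b2⟩ := refl_aux VB hVB RB hRB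
      have e : star ((RA * RB) *ᵥ v) ⬝ᵥ ((RA * RB) *ᵥ v) = star v ⬝ᵥ v := by
        rw [star_mulVec, ← dotProduct_mulVec, mulVec_mulVec, conjTranspose_mul, a2, b2,
          Matrix.mul_assoc, ← Matrix.mul_assoc RA, a1, Matrix.one_mul, b1, one_mulVec]
      rw [h, star_smul, smul_dotProduct, dotProduct_smul, smul_smul, smul_eq_mul] at e
      have e2 : star μ * μ = 1 := mul_right_cancel₀ hsvv (by rw [e, one_mul])
      have e3 : ‖star μ * μ‖ = 1 := by rw [e2, norm_one]
      rw [norm_mul, norm_star] at e3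
      nlinarith [norm_nonneg μ]
    have hμ0 : μ ≠ 0 := by rintro rfl; simp at hnorm
    obtain ⟨lam, θ, hl, hθ, hc, hlam, hor⟩ := circle_aux μ hnorm h1 h2
    refine ⟨lam, θ, hl, hθ, hc, ?_, hor⟩
    have E := eig_aux VA VB hVA RA RB hRA hRB μ v h
    have EB := congrArg (fun w => VBᴴ *ᵥ w) E
    have EA := congrArg (fun w => VAᴴ *ᵥ w) E
    simp only [mulVec_sub, mulVec_smul, hAmul, hBmul] at EA EB
    set x := VBᴴ *ᵥ v with hx
    set y := VAᴴ *ᵥ v with hy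
    have EA' : (1 + μ) • y = (2 : ℂ) • (VAᴴ *ᵥ (VB *ᵥ x)) := by
      linear_combination (norm := module) -EA
    have EB' : (1 + μ) • x = (2 * μ) • (VBᴴ *ᵥ (VA *ᵥ y)) := by
      linear_combination (norm := module) EB
    have hx0 : x ≠ 0 := by
      intro hx0
      have hy0 : y = 0 := by
        rw [hx0] at EA'
        simpa [h2'] using EA'
      exact hv0 (zero_aux VA VB v hv hy0 hx0)
    have hEig : ((VAᴴ * VB)ᴴ * (VAᴴ * VB)) *ᵥ x = ((lam : ℂ) ^ 2) • x := by
      rw [hM]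
      have e := congrArg (fun w => VBᴴ *ᵥ (VA *ᵥ w)) EA'
      simp only [mulVec_smul] at e
      have : (4 * μ) • (VBᴴ *ᵥ (VA *ᵥ (VAᴴ *ᵥ (VB *ᵥ x)))) = (4 * μ) • (((lam : ℂ) ^ 2) • x) := by
        rw [smul_smul, hlam, pow_two, mul_smul (1 + μ) (1 + μ), EB', smul_comm, e]
        module
      exact smul_right_injective _ (show (4 * μ : ℂ) ≠ 0 from mul_ne_zero (by norm_num) hμ0) this
    rw [← Matrix.spectrum_toLin']
    apply Module.End.HasEigenvalue.mem_spectrum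
    exact Module.End.hasEigenvalue_of_hasEigenvector
      ⟨Module.End.mem_eigenspace_iff.2 (by rw [toLin'_apply]; exact hEig), hx0⟩
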